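/- arXiv:1603.05483 — 2 statements merged into one kernel-verified Lean document; each statement's English description precedes it below -/
import Mathlib

section
/- Existence of an exponentially growing and an exponentially decaying solution (Levinson-type, special case): Let β > 0, γ ∈ (1/2, 1), and let R : [0,∞) → M^{2×2}(ℂ) be measurable with ∫₀^∞ ‖R(x)‖ dx < ∞. Then the system u′(x) = ( (β/x^γ) diag(1,−1) + R(x) ) u(x) on (0,∞) has solutions u₊, u₋ with u₊(x) = exp(β x^{1−γ}/(1−γ))(e₊ + o(1)) and u₋(x) = exp(−β x^{1−γ}/(1−γ))(e₋ + o(1)) as x → +∞, where e₊ = (1,0)ᵀ and e₋ = (0,1)ᵀ. -/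
open MeasureTheory Real Filter Topology

theorem AbsolutelyContinuousOnInterval.of_dist_le {X Y : Type*} [PseudoMetricSpace X]
    [PseudoMetricSpace Y] {f : ℝ → X} {g : ℝ → Y} {a b : ℝ} {C : ℝ} (hC : 0 < C)
    (hg : AbsolutelyContinuousOnInterval g a b)
    (h : ∀ x ∈ Set.uIcc a b, ∀ y ∈ Set.uIcc a b, dist (f x) (f y) ≤ C * dist (g x) (g y)) :
    AbsolutelyContinuousOnInterval f a b := by
  rw [absolutelyContinuousOnInterval_iff] at hg ⊢
  intro ε hε
  obtain ⟨δ, hδ, H⟩ := hg (ε / C) (by positivity)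
  refine ⟨δ, hδ, fun E hE hEδ => ?_⟩
  calc ∑ i ∈ Finset.range E.1, dist (f (E.2 i).1) (f (E.2 i).2)
      ≤ ∑ i ∈ Finset.range E.1, C * dist (g (E.2 i).1) (g (E.2 i).2) := by
        refine Finset.sum_le_sum fun i hi => ?_
        have := hE.1 i hi
        exact h _ this.1 _ this.2
    _ = C * ∑ i ∈ Finset.range E.1, dist (g (E.2 i).1) (g (E.2 i).2) := by
        rw [Finset.mul_sum]
    _ < C * (ε / C) := mul_lt_mul_of_pos_left (H E hE hEδ) hC
    _ = ε := by field_simp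

theorem AbsolutelyContinuousOnInterval.of_intervalIntegral {E : Type*} [NormedAddCommGroup E]
    [NormedSpace ℝ E] {h : ℝ → E} {a b c : ℝ} (hh : IntervalIntegrable h volume a b)
    (hc : c ∈ Set.uIcc a b) :
    AbsolutelyContinuousOnInterval (fun x => ∫ t in c..x, h t) a b := by
  refine .of_dist_le one_pos (hh.norm.absolutelyContinuousOnInterval_intervalIntegral hc) ?_
  intro x hx y hy
  have hi : ∀ z ∈ Set.uIcc a b, IntervalIntegrable h volume c z := fun z hz =>
    hh.mono_set (Set.uIcc_subset_uIcc hc hz)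
  rw [one_mul, dist_eq_norm, dist_eq_norm,
    intervalIntegral.integral_interval_sub_left (hi x hx) (hi y hy),
    intervalIntegral.integral_interval_sub_left (hi x hx).norm (hi y hy).norm]
  exact intervalIntegral.norm_integral_le_abs_integral_norm

theorem AbsolutelyContinuousOnInterval.integral_eq_sub_of_ae_hasDerivAt {E : Type*}
    [NormedAddCommGroup E] [NormedSpace ℝ E] [CompleteSpace E] {f f' : ℝ → E} {a b : ℝ}
    (hf : AbsolutelyContinuousOnInterval f a b) (hf' : IntervalIntegrable f' volume a b)
    (h : ∀ᵐ x, x ∈ Set.uIcc a b → HasDerivAt f (f' x) x) :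
    ∫ x in a..b, f' x = f b - f a := by
  have hg := hf.sub (.of_intervalIntegral hf' (c := a) Set.left_mem_uIcc)
  obtain ⟨C, hC⟩ := hg.const_of_ae_hasDerivAt_zero (by
    filter_upwards [h, hf'.ae_hasDerivAt_integral] with x h1 h2 hx
    simpa using (h1 hx).sub (h2 hx a Set.left_mem_uIcc))
  have h1 := hC a Set.left_mem_uIcc
  have h2 := hC b Set.right_mem_uIcc
  simp only [Pi.sub_apply, intervalIntegral.integral_same, sub_zero] at h1 h2
  rw [h1, ← h2]
  abel

theorem integral_mul_exp_integral {r : ℝ → ℝ} (hr : Integrable r) {K : ℝ}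
    (hK : 0 < K) (x a : ℝ) :
    ∫ t in x..a, r t * Real.exp (K * ∫ s in t..a, r s) =
      (Real.exp (K * ∫ s in x..a, r s) - 1) / K := by
  have hi : ∀ p q, IntervalIntegrable r volume p q := fun p q => hr.intervalIntegrable
  have hH : AbsolutelyContinuousOnInterval (fun t => K * ∫ s in t..a, r s) x a := by
    refine .const_mul K ?_
    simp_rw [fun t => intervalIntegral.integral_symm (f := r) (μ := volume) a t]
    exact .neg (.of_intervalIntegral (hi x a) Set.right_mem_uIcc)
  obtain ⟨B, hB⟩ := hH.exists_bound
  have hE : AbsolutelyContinuousOnInterval (fun t => Real.exp (K * ∫ s in t..a, r s)) x a := by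
    refine .of_dist_le (Real.exp_pos B) hH fun s hs t ht => ?_
    simp only [dist_eq_norm]
    exact (convex_Iic B).norm_image_sub_le_of_norm_hasDerivWithin_le
      (fun y _ => (Real.hasDerivAt_exp y).hasDerivWithinAt)
      (fun y hy => (Real.norm_of_nonneg (Real.exp_pos y).le).trans_le (Real.exp_le_exp.2 hy))
      ((le_abs_self _).trans (hB t ht)) ((le_abs_self _).trans (hB s hs))
  have key := AbsolutelyContinuousOnInterval.integral_eq_sub_of_ae_hasDerivAt
    (f' := fun t => -K * (r t * Real.exp (K * ∫ s in t..a, r s))) hE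
    (((hi x a).mul_continuousOn hE.continuousOn).const_mul _) (by
      filter_upwards [(hi x a).ae_hasDerivAt_integral] with t ht htm
      have h1 := (((ht htm a Set.right_mem_uIcc).neg).const_mul K).exp
      simp_rw [fun t => intervalIntegral.integral_symm (f := r) (μ := volume) a t]
      exact h1.congr_deriv (by simp only [Pi.neg_apply]; ring))
  rw [intervalIntegral.integral_const_mul] at key
  rw [eq_div_iff hK.ne']
  simp only [intervalIntegral.integral_same, mul_zero, Real.exp_zero] at key
  linarith

theorem integral_deriv_mul_add_mul {p p' : ℝ → ℝ} {q h : ℝ → ℂ} {x y : ℝ}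
    (hp : ∀ t ∈ Set.uIcc x y, HasDerivAt p (p' t) t) (hp' : ContinuousOn p' (Set.uIcc x y))
    (hh : IntervalIntegrable h volume x y)
    (hq : ∀ t ∈ Set.uIcc x y, q t = q x + ∫ s in x..t, h s) :
    ∫ t in x..y, ((p' t : ℂ) * q t + p t * h t) = p y * q y - p x * q x := by
  have hpAC : AbsolutelyContinuousOnInterval p x y := by
    obtain ⟨B, hB⟩ := isCompact_uIcc.exists_bound_of_continuousOn hp'
    have hlip := (convex_uIcc x y).lipschitzOnWith_of_nnnorm_hasDerivWithin_le
      (f := p) (f' := p') (C := B.toNNReal)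
      (fun t ht => (hp t ht).hasDerivWithinAt) (fun t ht => by
        rw [← NNReal.coe_le_coe, coe_nnnorm]
        exact (hB t ht).trans (Real.le_coe_toNNReal B))
    exact hlip.absolutelyContinuousOnInterval
  have hpc : ContinuousOn p (Set.uIcc x y) := hpAC.continuousOn
  have hQ := AbsolutelyContinuousOnInterval.of_intervalIntegral hh Set.left_mem_uIcc
  have hQ' : AbsolutelyContinuousOnInterval (fun t => q x + ∫ s in x..t, h s) x y :=
    .of_dist_le one_pos hQ (fun s _ t _ => by simp)
  have hqc : ContinuousOn q (Set.uIcc x y) := hQ'.continuousOn.congr hq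
  have key := (hpAC.smul hQ').integral_eq_sub_of_ae_hasDerivAt
    (f' := fun t => p t • h t + p' t • (q x + ∫ s in x..t, h s))
    ((hh.continuousOn_smul hpc).add (hp'.smul hQ'.continuousOn).intervalIntegrable) (by
      filter_upwards [hh.ae_hasDerivAt_integral] with t ht htm
      exact (hp t htm).smul ((ht htm x Set.left_mem_uIcc).const_add (q x)))
  simp only [Pi.smul_apply', ← hq x Set.left_mem_uIcc, ← hq y Set.right_mem_uIcc] at key
  simp only [Complex.real_smul] at key
  rw [← key]
  refine intervalIntegral.integral_congr fun t ht => ?_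
  simp only [← hq t ht]
  ring

open scoped Matrix in
theorem integrable_kernel_mul_mulVec {ι : Type*} [Fintype ι] {R : ℝ → Matrix ι ι ℂ} {r : ℝ → ℝ}
    (hRm : ∀ i j, Measurable fun t => R t i j) (hr : Integrable r)
    (hRr : ∀ t v, ‖R t *ᵥ v‖ ≤ r t * ‖v‖) {k : ℝ → ℝ} {C : ℝ} (hkm : Measurable k)
    (hkC : ∀ t, |k t| ≤ C) {v : ℝ → ι → ℂ} (hv : Continuous v) {B : ℝ} (hB : ∀ t, ‖v t‖ ≤ B)
    (i : ι) :
    AEStronglyMeasurable (fun t => (k t : ℂ) * (R t *ᵥ v t) i) ∧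
      (∀ t, ‖(k t : ℂ) * (R t *ᵥ v t) i‖ ≤ C * (|r t| * B)) ∧
      Integrable (fun t => (k t : ℂ) * (R t *ᵥ v t) i) := by
  have hm : AEStronglyMeasurable (fun t => (k t : ℂ) * (R t *ᵥ v t) i) := by
    refine Measurable.aestronglyMeasurable ?_
    refine (Complex.measurable_ofReal.comp hkm).mul ?_
    simp only [Matrix.mulVec, dotProduct]
    exact Finset.measurable_sum _ fun j _ =>
      (hRm i j).mul ((continuous_apply j).comp hv).measurable
  have hb : ∀ t, ‖(k t : ℂ) * (R t *ᵥ v t) i‖ ≤ C * (|r t| * B) := fun t => by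
    rw [norm_mul, Complex.norm_real, Real.norm_eq_abs]
    refine mul_le_mul (hkC t) ?_ (norm_nonneg _) ((abs_nonneg _).trans (hkC t))
    calc ‖(R t *ᵥ v t) i‖ ≤ ‖R t *ᵥ v t‖ := norm_le_pi_norm _ i
      _ ≤ r t * ‖v t‖ := hRr t _
      _ ≤ |r t| * B := mul_le_mul (le_abs_self _) (hB t) (norm_nonneg _) (abs_nonneg _)
  exact ⟨hm, hb, ((hr.abs.mul_const B).const_mul C).mono' hm (.of_forall hb)⟩

open scoped Matrix BoundedContinuousFunction in
theorem exists_bounded_solution_of_kernel {ι : Type*} [Fintype ι] {R : ℝ → Matrix ι ι ℂ}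
    {r : ℝ → ℝ} (hRm : ∀ i j, Measurable fun t => R t i j) (hr : Integrable r) (hr0 : ∀ t, 0 ≤ r t)
    (hRr : ∀ t v, ‖R t *ᵥ v‖ ≤ r t * ‖v‖) {k : ι → ℝ → ℝ → ℝ} {C : ℝ}
    (hkm : ∀ i x, Measurable (k i x)) (hkC : ∀ i x t, |k i x t| ≤ C)
    (hkc : ∀ i x₀, ∀ᵐ t, ContinuousAt (fun x => k i x t) x₀) {W : ℝ → ℝ} (hWc : Continuous W)
    (hW1 : ∀ x, 1 ≤ W x) {M : ℝ} (hWM : ∀ x, W x ≤ M)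
    (hsmall : ∀ i x, ∫ t, |k i x t| * (r t * W t) ≤ W x / 2) (c : ι → ℂ) :
    ∃ v : ℝ → ι → ℂ, Continuous v ∧ (∃ B, ∀ x, ‖v x‖ ≤ B) ∧
      ∀ x i, v x i = c i + ∫ t, (k i x t : ℂ) * (R t *ᵥ v t) i := by
  have hW0 : ∀ x, 0 < W x := fun x => one_pos.trans_le (hW1 x)
  have hwz : ∀ z : ℝ →ᵇ (ι → ℂ), Continuous (fun t => W t • z t) ∧ ∀ t, ‖W t • z t‖ ≤ M * ‖z‖ :=
    fun z => ⟨hWc.smul z.continuous, fun t => by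
      rw [norm_smul, Real.norm_of_nonneg (hW0 t).le]
      exact mul_le_mul (hWM t) (z.norm_coe_le_norm t) (norm_nonneg _) ((hW0 t).le.trans (hWM t))⟩
  have hop := fun (z : ℝ →ᵇ (ι → ℂ)) i x => integrable_kernel_mul_mulVec hRm hr hRr (hkm i x)
    (hkC i x) (hwz z).1 (hwz z).2 i
  let G : (ℝ →ᵇ (ι → ℂ)) → ℝ → ι → ℂ := fun z x i =>
    c i + ∫ t, (k i x t : ℂ) * (R t *ᵥ (W t • z t)) i
  have hGc : ∀ z, Continuous (G z) := fun z => by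
    refine continuous_pi fun i => continuous_const.add (continuous_iff_continuousAt.2 fun x₀ => ?_)
    refine continuousAt_of_dominated (.of_forall fun x => (hop z i x).1)
      (.of_forall fun x => .of_forall (hop z i x).2.1)
      ((hr.abs.mul_const _).const_mul C) ?_
    filter_upwards [hkc i x₀] with t ht
    exact (Complex.continuous_ofReal.continuousAt.comp ht).mul continuousAt_const
  have hGb : ∀ z, ∃ D, ∀ x, ‖(W x)⁻¹ • G z x‖ ≤ D := fun z => by
    refine ⟨‖c‖ + |∫ t, C * (|r t| * (M * ‖z‖))|, fun x => ?_⟩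
    have h0 : ‖G z x‖ ≤ ‖c‖ + |∫ t, C * (|r t| * (M * ‖z‖))| := by
      refine (pi_norm_le_iff_of_nonneg (by positivity)).2 fun i => ?_
      refine (norm_add_le _ _).trans (add_le_add (norm_le_pi_norm c i) ?_)
      exact (norm_integral_le_of_norm_le ((hr.abs.mul_const _).const_mul C)
        (.of_forall (hop z i x).2.1)).trans (le_abs_self _)
    rw [norm_smul, norm_inv, Real.norm_of_nonneg (hW0 x).le]
    exact (mul_le_of_le_one_left (norm_nonneg _) (inv_le_one_of_one_le₀ (hW1 x))).trans h0
  choose D hD using hGb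
  let T : (ℝ →ᵇ (ι → ℂ)) → (ℝ →ᵇ (ι → ℂ)) := fun z =>
    BoundedContinuousFunction.ofNormedAddCommGroup (fun x => (W x)⁻¹ • G z x)
      ((hWc.inv₀ fun x => (hW0 x).ne').smul (hGc z)) (D z) (hD z)
  have hT : ContractingWith (1 / 2) T := by
    refine ⟨by norm_num, LipschitzWith.of_dist_le_mul fun z₁ z₂ => ?_⟩
    refine (BoundedContinuousFunction.dist_le (by positivity)).2 fun x => ?_
    rw [dist_eq_norm]
    change ‖(W x)⁻¹ • G z₁ x - (W x)⁻¹ • G z₂ x‖ ≤ _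
    rw [← smul_sub, norm_smul, norm_inv, Real.norm_of_nonneg (hW0 x).le,
      inv_mul_le_iff₀ (hW0 x)]
    refine (pi_norm_le_iff_of_nonneg (by have := hW0 x; positivity)).2 fun i => ?_
    have h1 : (G z₁ x - G z₂ x) i = ∫ t, (k i x t : ℂ) * (R t *ᵥ (W t • (z₁ t - z₂ t))) i := by
      simp only [G, Pi.sub_apply, add_sub_add_left_eq_sub]
      rw [← integral_sub (hop z₁ i x).2.2 (hop z₂ i x).2.2]
      simp only [smul_sub, Matrix.mulVec_sub, Pi.sub_apply, mul_sub]
    rw [h1]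
    have hint : Integrable fun t => |k i x t| * (r t * W t) := by
      refine (hr.mul_bdd (c := M) hWc.aestronglyMeasurable (.of_forall fun t => ?_)).bdd_mul
        (c := C) (hkm i x).abs.aestronglyMeasurable (.of_forall fun t => ?_)
      · rw [Real.norm_of_nonneg (hW0 t).le]; exact hWM t
      · rw [Real.norm_eq_abs, abs_abs]; exact hkC i x t
    calc _ ≤ ∫ t, |k i x t| * (r t * W t) * dist z₁ z₂ := by
          refine norm_integral_le_of_norm_le (hint.mul_const _) (.of_forall fun t => ?_)
          rw [norm_mul, Complex.norm_real, Real.norm_eq_abs, mul_assoc]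
          refine mul_le_mul_of_nonneg_left ?_ (abs_nonneg _)
          calc _ ≤ ‖R t *ᵥ (W t • (z₁ t - z₂ t))‖ := norm_le_pi_norm _ i
            _ ≤ r t * ‖W t • (z₁ t - z₂ t)‖ := hRr t _
            _ = r t * W t * dist (z₁ t) (z₂ t) := by
              rw [norm_smul, Real.norm_of_nonneg (hW0 t).le, dist_eq_norm, mul_assoc]
            _ ≤ r t * W t * dist z₁ z₂ := by
              exact mul_le_mul_of_nonneg_left (BoundedContinuousFunction.dist_coe_le_dist t)
                (mul_nonneg (hr0 t) (hW0 t).le)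
      _ = (∫ t, |k i x t| * (r t * W t)) * dist z₁ z₂ := integral_mul_const _ _
      _ ≤ W x / 2 * dist z₁ z₂ := mul_le_mul_of_nonneg_right (hsmall i x) dist_nonneg
      _ = _ := by push_cast; ring
  refine ⟨fun x => W x • hT.fixedPoint T x, (hwz _).1, ⟨_, (hwz _).2⟩, fun x i => ?_⟩
  have hfp := DFunLike.congr_fun hT.fixedPoint_isFixedPt.eq x
  have h2 : W x • hT.fixedPoint T x = G (hT.fixedPoint T) x := by
    conv_lhs => rw [← hfp]
    exact smul_inv_smul₀ (hW0 x).ne' _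
  exact congr_fun h2 i

open scoped Matrix in
theorem exists_bounded_solution_of_dichotomy_kernel {ι : Type*} [Fintype ι]
    {R : ℝ → Matrix ι ι ℂ} {r : ℝ → ℝ} (hRm : ∀ i j, Measurable fun t => R t i j)
    (hr : Integrable r) (hr0 : ∀ t, 0 ≤ r t) (hRr : ∀ t v, ‖R t *ᵥ v‖ ≤ r t * ‖v‖)
    {k : ι → ℝ → ℝ → ℝ} {C : ℝ} (hC : 0 < C) (hkm : ∀ i x, Measurable (k i x))
    (hkC : ∀ i x t, |k i x t| ≤ C) (hkc : ∀ i x₀, ∀ᵐ t, ContinuousAt (fun x => k i x t) x₀)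
    {a : ℝ} (ha : ∫ t in Set.Ioi a, r t ≤ 1 / 4) (hk1 : ∀ i x t, a < t → |k i x t| ≤ 1)
    (hk0 : ∀ i x t, t ≤ a → t ≤ x → k i x t = 0) (c : ι → ℂ) :
    ∃ v : ℝ → ι → ℂ, Continuous v ∧ (∃ B, ∀ x, ‖v x‖ ≤ B) ∧
      ∀ x i, v x i = c i + ∫ t, (k i x t : ℂ) * (R t *ᵥ v t) i := by
  have hi : ∀ p q, IntervalIntegrable r volume p q := fun p q => hr.intervalIntegrable
  let H : ℝ → ℝ := fun x => ∫ t in x..a, r t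
  have hHc : Continuous H := by
    have h1 : Continuous fun x => -∫ t in a..x, r t :=
      (intervalIntegral.continuous_primitive hi a).neg
    exact h1.congr fun x => (intervalIntegral.integral_symm _ _).symm
  let E : ℝ → ℝ := fun x => Real.exp (4 * C * H x)
  have hEc : Continuous E := Real.continuous_exp.comp (continuous_const.mul hHc)
  have hH0 : ∀ x ≤ a, 0 ≤ H x := fun x hx =>
    intervalIntegral.integral_nonneg hx fun t _ => hr0 t
  have hHle : ∀ x ≤ a, H x ≤ ∫ t, r t := fun x hx => by
    simp only [H]
    rw [intervalIntegral.integral_of_le hx]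
    exact setIntegral_le_integral hr (.of_forall hr0)
  have hW1 : ∀ x, 1 ≤ E (min x a) := fun x =>
    Real.one_le_exp (mul_nonneg (by positivity) (hH0 _ (min_le_right _ _)))
  refine exists_bounded_solution_of_kernel hRm hr hr0 hRr hkm hkC hkc
    (W := fun x => E (min x a)) (M := Real.exp (4 * C * ∫ t, r t))
    (hEc.comp (continuous_id.min continuous_const)) hW1
    (fun x => Real.exp_le_exp.2
      (mul_le_mul_of_nonneg_left (hHle _ (min_le_right _ _)) (by positivity)))
    (fun i x => ?_) c
  have hI1 : Integrable ((Set.Ioi a).indicator r) := hr.indicator measurableSet_Ioi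
  have hI2 : Integrable ((Set.Ioc (min x a) a).indicator fun t => C * (r t * E t)) := by
    rw [integrable_indicator_iff measurableSet_Ioc]
    have := ((hi (min x a) a).mul_continuousOn hEc.continuousOn).const_mul C
    exact (intervalIntegrable_iff_integrableOn_Ioc_of_le (min_le_right _ _)).1 this
  calc ∫ t, |k i x t| * (r t * E (min t a))
      ≤ ∫ t, ((Set.Ioi a).indicator r t +
          (Set.Ioc (min x a) a).indicator (fun t => C * (r t * E t)) t) := by
        refine integral_mono_of_nonneg (.of_forall fun t => ?_) (hI1.add hI2)
          (.of_forall fun t => ?_)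
        · exact mul_nonneg (abs_nonneg _) (mul_nonneg (hr0 t) (Real.exp_pos _).le)
        · have hE2 : 0 ≤ C * (r t * E t) :=
            mul_nonneg hC.le (mul_nonneg (hr0 t) (Real.exp_pos _).le)
          beta_reduce
          rcases lt_or_ge a t with hat | hta
          · have hE1 : E a = 1 := by simp [E, H]
            rw [min_eq_right hat.le, hE1, mul_one, Set.indicator_of_mem (Set.mem_Ioi.2 hat),
              Set.indicator_of_notMem (fun h => hat.not_ge h.2), add_zero]
            exact mul_le_of_le_one_left (hr0 t) (hk1 i x t hat)
          · rw [Set.indicator_of_notMem (s := Set.Ioi a) (fun h => hta.not_gt h), zero_add, min_eq_left hta]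
            rcases le_or_gt t x with htx | hxt
            · rw [hk0 i x t hta htx, abs_zero, zero_mul]
              exact Set.indicator_apply_nonneg fun _ => hE2
            · rw [Set.indicator_of_mem (Set.mem_Ioc.2 ⟨(min_le_left _ _).trans_lt hxt, hta⟩)]
              exact mul_le_mul_of_nonneg_right (hkC i x t)
                (mul_nonneg (hr0 t) (Real.exp_pos _).le)
    _ = (∫ t in Set.Ioi a, r t) + C * ((E (min x a) - 1) / (4 * C)) := by
        rw [integral_add hI1 hI2, integral_indicator measurableSet_Ioi,
          integral_indicator measurableSet_Ioc,
          ← intervalIntegral.integral_of_le (min_le_right _ _),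
          intervalIntegral.integral_const_mul]
        congr 2
        exact integral_mul_exp_integral hr (by positivity) _ _
    _ ≤ E (min x a) / 2 := by
        have h1 := hW1 x
        have h2 : C * ((E (min x a) - 1) / (4 * C)) = (E (min x a) - 1) / 4 := by field_simp
        rw [h2]
        linarith

theorem exists_setIntegral_Ioi_le {r : ℝ → ℝ} (hr : Integrable r) {ε : ℝ} (hε : 0 < ε) :
    ∃ a, ∫ t in Set.Ioi a, r t ≤ ε := by
  have h : Tendsto (fun a => ∫ t, (Set.Ioi a).indicator r t) atTop (𝓝 (∫ _ : ℝ, (0 : ℝ))) := by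
    refine tendsto_integral_filter_of_dominated_convergence (fun t => ‖r t‖)
      (.of_forall fun a => (hr.indicator measurableSet_Ioi).aestronglyMeasurable)
      (.of_forall fun a => .of_forall fun t => norm_indicator_le_norm_self r t) hr.norm
      (.of_forall fun t => tendsto_const_nhds.congr' ?_)
    filter_upwards [eventually_ge_atTop t] with a hat
    exact (Set.indicator_of_notMem (fun h => hat.not_gt h) _).symm
  rw [integral_zero] at h
  obtain ⟨a, ha⟩ := (h.eventually (ge_mem_nhds hε)).exists
  exact ⟨a, by rwa [integral_indicator measurableSet_Ioi] at ha⟩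

open scoped Matrix in
theorem exists_levinson_amplitude {ι : Type*} [Fintype ι]
    {R : ℝ → Matrix ι ι ℂ} {r : ℝ → ℝ} (hRm : ∀ i j, Measurable fun t => R t i j)
    (hr : Integrable r) (hr0 : ∀ t, 0 ≤ r t) (hRr : ∀ t v, ‖R t *ᵥ v‖ ≤ r t * ‖v‖)
    {φ : ℝ → ℝ} (hφc : Continuous φ) (hφm : Monotone φ) (hφ0 : ∀ x, 0 ≤ φ x)
    (hφt : Tendsto φ atTop atTop) (μ : ι → ℝ) (c : ι → ℂ) (hc : ∀ i, c i = 0 ∨ μ i = 0) :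
    ∃ v : ℝ → ι → ℂ, Continuous v ∧ (∃ B, ∀ x, ‖v x‖ ≤ B) ∧
      (∀ i x y, (Real.exp (μ i * φ y) : ℂ) * v y i - (Real.exp (μ i * φ x) : ℂ) * v x i =
        ∫ t in x..y, (Real.exp (μ i * φ t) : ℂ) * (R t *ᵥ v t) i) ∧
      Tendsto v atTop (𝓝 c) := by
  obtain ⟨a, ha⟩ := exists_setIntegral_Ioi_le hr (ε := 1 / 4) (by norm_num)
  let m : ι → ℝ → ℝ → ℝ := fun i x t =>
    if t ≤ x then (if 0 < μ i ∧ a < t then 1 else 0) else (if 0 < μ i ∧ a < t then 0 else -1)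
  let k : ι → ℝ → ℝ → ℝ := fun i x t => Real.exp (μ i * (φ t - φ x)) * m i x t
  have hmm : ∀ i x, Measurable (m i x) := fun i x => by
    have hs : MeasurableSet {t : ℝ | 0 < μ i ∧ a < t} :=
      (MeasurableSet.const _).inter measurableSet_Ioi
    exact Measurable.ite measurableSet_Iic (measurable_const.ite hs measurable_const)
      (measurable_const.ite hs measurable_const)
  have hkm : ∀ i x, Measurable (k i x) := fun i x => by
    refine Measurable.mul ?_ (hmm i x)
    exact (Real.continuous_exp.comp
      (continuous_const.mul (hφc.sub continuous_const))).measurable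
  have hm1 : ∀ i x t, |m i x t| ≤ 1 := fun i x t => by
    simp only [m]
    split_ifs <;> norm_num
  have hk0 : ∀ i x t, t ≤ a → t ≤ x → k i x t = 0 := fun i x t hta htx => by
    simp [k, m, htx, hta.not_gt]
  have hkexp : ∀ i x t, |k i x t| ≤ Real.exp (μ i * (φ t - φ x)) := fun i x t => by
    rw [abs_mul, abs_of_pos (Real.exp_pos _)]
    exact mul_le_of_le_one_right (Real.exp_pos _).le (hm1 i x t)
  have hk1 : ∀ i x t, a < t ∨ μ i ≤ 0 → |k i x t| ≤ 1 := fun i x t h => by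
    rcases le_or_gt t x with htx | hxt
    · by_cases hp : 0 < μ i ∧ a < t
      · refine (hkexp i x t).trans (Real.exp_le_one_iff.2 ?_)
        exact mul_nonpos_of_nonneg_of_nonpos hp.1.le (sub_nonpos.2 (hφm htx))
      · simp [k, m, htx, hp]
    · by_cases hp : 0 < μ i ∧ a < t
      · simp [k, m, hxt.not_ge, hp]
      · refine (hkexp i x t).trans (Real.exp_le_one_iff.2 ?_)
        have : μ i ≤ 0 := by
          rcases h with h | h
          · exact not_lt.1 fun h' => hp ⟨h', h⟩
          · exact h
        exact mul_nonpos_of_nonpos_of_nonneg this (sub_nonneg.2 (hφm hxt.le))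
  let C := Real.exp (∑ i, |μ i| * φ a)
  have hkC : ∀ i x t, |k i x t| ≤ C := fun i x t => by
    have hs : ∀ i, 0 ≤ |μ i| * φ a := fun i => mul_nonneg (abs_nonneg _) (hφ0 a)
    by_cases h : a < t ∨ μ i ≤ 0
    · exact (hk1 i x t h).trans (Real.one_le_exp (Finset.sum_nonneg fun i _ => hs i))
    · push Not at h
      refine (hkexp i x t).trans (Real.exp_le_exp.2 ?_)
      refine le_trans ?_ (Finset.single_le_sum (fun i _ => hs i) (Finset.mem_univ i))
      rw [abs_of_pos h.2]
      exact mul_le_mul_of_nonneg_left (by linarith [hφm h.1, hφ0 x]) h.2.le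
  have hkc : ∀ i x₀, ∀ᵐ t, ContinuousAt (fun x => k i x t) x₀ := fun i x₀ => by
    filter_upwards [Measure.ae_ne volume x₀] with t ht
    refine ContinuousAt.mul ?_ ?_
    · exact (Real.continuous_exp.comp
        (continuous_const.mul (continuous_const.sub hφc))).continuousAt
    · refine (continuousAt_const (y := m i x₀ t)).congr ?_
      rcases ht.lt_or_gt with h | h
      · filter_upwards [lt_mem_nhds h] with x hx
        simp [m, hx.le, h.le]
      · filter_upwards [gt_mem_nhds h] with x hx
        simp [m, hx.not_ge, h.not_ge]
  obtain ⟨v, hvc, ⟨B, hB⟩, hv⟩ := exists_bounded_solution_of_dichotomy_kernel hRm hr hr0 hRr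
    (Real.exp_pos _) hkm hkC hkc ha (fun i x t h => hk1 i x t (.inl h)) hk0 c
  have hint := fun i x => integrable_kernel_mul_mulVec hRm hr hRr (hkm i x) (hkC i x) hvc hB i
  refine ⟨v, hvc, ⟨B, hB⟩, fun i => ?_, tendsto_pi_nhds.2 fun i => ?_⟩
  · let g : ℝ → ℂ := fun t => (Real.exp (μ i * φ t) : ℂ) * (R t *ᵥ v t) i
    have hker : ∀ x t, (Real.exp (μ i * φ x) : ℂ) * ((k i x t : ℂ) * (R t *ᵥ v t) i) =
        (m i x t : ℂ) * g t := fun x t => by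
      have : Real.exp (μ i * φ t) = Real.exp (μ i * φ x) * Real.exp (μ i * (φ t - φ x)) := by
        rw [← Real.exp_add]
        ring_nf
      simp only [k, g, this]
      push_cast
      ring
    have hcx : ∀ x, (Real.exp (μ i * φ x) : ℂ) * c i = c i := fun x => by
      rcases hc i with h | h <;> simp [h]
    have hq : ∀ x, (Real.exp (μ i * φ x) : ℂ) * v x i = c i + ∫ t, (m i x t : ℂ) * g t :=
      fun x => by
        rw [hv x i, mul_add, hcx, ← integral_const_mul]
        simp only [hker]
    have hgi : ∀ x, Integrable fun t => (m i x t : ℂ) * g t := fun x => by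
      simp only [← hker]
      exact (hint i x).2.2.const_mul _
    have hle : ∀ x y, x ≤ y → (Real.exp (μ i * φ y) : ℂ) * v y i -
        (Real.exp (μ i * φ x) : ℂ) * v x i = ∫ t in x..y, g t := fun x y hxy => by
      rw [hq, hq, add_sub_add_left_eq_sub, ← integral_sub (hgi y) (hgi x),
        intervalIntegral.integral_of_le hxy, ← integral_indicator measurableSet_Ioc]
      congr 1
      ext t
      rw [← sub_mul, ← Complex.ofReal_sub]
      rcases le_or_gt t x with h1 | h1
      · simp [m, h1, h1.trans hxy]
      · rcases le_or_gt t y with h2 | h2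
        · have : m i y t - m i x t = 1 := by
            simp only [m, h2, h1.not_ge, if_true, if_false]
            split_ifs <;> norm_num
          simp [this, h1, h2]
        · simp [m, h1.not_ge, h2.not_ge]
    intro x y
    rcases le_total x y with h | h
    · exact hle x y h
    · rw [intervalIntegral.integral_symm, ← hle y x h, neg_sub]
  · have hlim : Tendsto (fun x => ∫ t, (k i x t : ℂ) * (R t *ᵥ v t) i) atTop
        (𝓝 (∫ _ : ℝ, (0 : ℂ))) := by
      refine tendsto_integral_filter_of_dominated_convergence _
        (.of_forall fun x => (hint i x).1) (.of_forall fun x => .of_forall (hint i x).2.1)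
        ((hr.abs.mul_const B).const_mul C) (.of_forall fun t => ?_)
      suffices h : Tendsto (fun x => k i x t) atTop (𝓝 0) by
        simpa using ((Complex.continuous_ofReal.tendsto 0).comp h).mul_const ((R t *ᵥ v t) i)
      rcases le_or_gt (μ i) 0 with h | h
      · refine tendsto_const_nhds.congr' ?_
        filter_upwards [eventually_ge_atTop t] with x hx
        simp [k, m, hx, h.not_gt]
      · refine squeeze_zero_norm (hkexp i · t) (Real.tendsto_exp_atBot.comp ?_)
        refine Tendsto.const_mul_atBot h ?_
        simp only [sub_eq_add_neg]
        exact tendsto_atBot_add_const_left _ _ (tendsto_neg_atTop_atBot.comp hφt)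
    rw [integral_zero] at hlim
    simpa [← hv] using hlim.const_add (c i)

open scoped Matrix in
theorem exists_levinson_solution {β γ : ℝ} (hβ : 0 < β) (hγ : γ < 1)
    {R : ℝ → Matrix (Fin 2) (Fin 2) ℂ} (hRmeas : ∀ i j, Measurable fun x => R x i j)
    (hRint : ∀ i j, IntegrableOn (fun x => R x i j) (Set.Ioi 0)) (τ : ℝ) (c : Fin 2 → ℂ)
    (hc : ∀ i, c i = 0 ∨ τ = (![1, -1] : Fin 2 → ℝ) i) :
    ∃ u : ℝ → (Fin 2 → ℂ),
      (∀ x y : ℝ, 0 < x → 0 < y →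
        u y = u x + ∫ t in x..y,
          ((((β / t ^ γ : ℝ) : ℂ) • (!![1,0;0,-1] : Matrix (Fin 2) (Fin 2) ℂ) + R t)).mulVec
            (u t)) ∧
      Tendsto (fun x => ((Real.exp (-(τ * (β * x ^ (1-γ) / (1-γ)))) : ℝ) : ℂ) • u x)
        atTop (𝓝 c) := by
  have hγ' : 0 < 1 - γ := sub_pos.2 hγ
  let s : Fin 2 → ℝ := ![1, -1]
  let φ : ℝ → ℝ := fun x => β * (max x 0) ^ (1 - γ) / (1 - γ)
  have hφpos : ∀ x, 0 < x → φ x = β * x ^ (1 - γ) / (1 - γ) := fun x hx => by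
    simp only [φ, max_eq_left hx.le]
  have hφc : Continuous φ :=
    (continuous_const.mul ((continuous_id.max continuous_const).rpow_const
      fun _ => .inr hγ'.le)).div_const _
  have hφm : Monotone φ := fun x y hxy => by
    simp only [φ]
    gcongr
  have hφ0 : ∀ x, 0 ≤ φ x := fun x => by positivity
  have hφt : Tendsto φ atTop atTop := by
    refine Tendsto.congr' (f₁ := fun x => β * x ^ (1 - γ) / (1 - γ)) ?_
      (((tendsto_rpow_atTop hγ').const_mul_atTop hβ).atTop_div_const hγ')
    filter_upwards [eventually_gt_atTop 0] with x hx
    exact (hφpos x hx).symm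
  have hφd : ∀ t, 0 < t → HasDerivAt φ (β / t ^ γ) t := fun t ht => by
    have h1 := ((Real.hasDerivAt_rpow_const (p := 1 - γ) (.inl ht.ne')).const_mul β).div_const
      (1 - γ)
    have h2 : β * ((1 - γ) * t ^ (1 - γ - 1)) / (1 - γ) = β / t ^ γ := by
      rw [show 1 - γ - 1 = -γ by ring, Real.rpow_neg ht.le]
      field_simp
    rw [h2] at h1
    refine h1.congr_of_eventuallyEq ?_
    filter_upwards [lt_mem_nhds ht] with x hx
    exact hφpos x hx
  let R' : ℝ → Matrix (Fin 2) (Fin 2) ℂ := (Set.Ioi 0).indicator R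
  have hR' : ∀ t, 0 < t → R' t = R t := fun t ht => Set.indicator_of_mem (Set.mem_Ioi.2 ht) R
  have hR'e : ∀ i j, (fun t => R' t i j) = (Set.Ioi 0).indicator fun t => R t i j := fun i j => by
    ext t
    by_cases ht : t ∈ Set.Ioi (0 : ℝ) <;> simp [R', ht]
  have hR'm : ∀ i j, Measurable fun t => R' t i j := fun i j => by
    rw [hR'e]
    exact (hRmeas i j).indicator measurableSet_Ioi
  have hR'i : ∀ i j, Integrable fun t => R' t i j := fun i j => by
    rw [hR'e]
    exact (integrable_indicator_iff measurableSet_Ioi).2 (hRint i j)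
  let r : ℝ → ℝ := fun t => ∑ i, ∑ j, ‖R' t i j‖
  have hr : Integrable r :=
    integrable_finsetSum _ fun i _ => integrable_finsetSum _ fun j _ => (hR'i i j).norm
  have hr0 : ∀ t, 0 ≤ r t := fun t => by positivity
  have hRr : ∀ t v, ‖R' t *ᵥ v‖ ≤ r t * ‖v‖ := fun t v => by
    refine (pi_norm_le_iff_of_nonneg (mul_nonneg (hr0 t) (norm_nonneg v))).2 fun i => ?_
    calc ‖(R' t *ᵥ v) i‖ ≤ ∑ j, ‖R' t i j * v j‖ :=
        norm_sum_le Finset.univ fun j => R' t i j * v j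
      _ ≤ ∑ j, ‖R' t i j‖ * ‖v‖ := Finset.sum_le_sum fun j _ => by
        rw [norm_mul]
        exact mul_le_mul_of_nonneg_left (norm_le_pi_norm v j) (norm_nonneg _)
      _ = (∑ j, ‖R' t i j‖) * ‖v‖ := (Finset.sum_mul _ _ _).symm
      _ ≤ r t * ‖v‖ := mul_le_mul_of_nonneg_right
        (Finset.single_le_sum (f := fun i => ∑ j, ‖R' t i j‖)
          (fun i _ => Finset.sum_nonneg fun j _ => norm_nonneg _) (Finset.mem_univ i))
        (norm_nonneg v)
  obtain ⟨v, hvc, ⟨B, hB⟩, hv, hvt⟩ := exists_levinson_amplitude hR'm hr hr0 hRr hφc hφm hφ0 hφt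
    (fun i => τ - s i) c (fun i => (hc i).imp_right sub_eq_zero.2)
  refine ⟨fun x => (Real.exp (τ * φ x) : ℂ) • v x, fun x y hx hy => ?_, hvt.congr' ?_⟩
  · have hpos : ∀ t ∈ Set.uIcc x y, 0 < t := fun t ht => (lt_min hx hy).trans_le ht.1
    let h : Fin 2 → ℝ → ℂ := fun i t => (Real.exp ((τ - s i) * φ t) : ℂ) * (R' t *ᵥ v t) i
    let p : Fin 2 → ℝ → ℝ := fun i t => Real.exp (s i * φ t)
    let q : Fin 2 → ℝ → ℂ := fun i t => (Real.exp ((τ - s i) * φ t) : ℂ) * v t i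
    let p' : Fin 2 → ℝ → ℝ := fun i t => p i t * (s i * (β / t ^ γ))
    have hpc : ∀ i, Continuous (p i) := fun i =>
      Real.continuous_exp.comp (continuous_const.mul hφc)
    have hp : ∀ i, ∀ t ∈ Set.uIcc x y, HasDerivAt (p i) (p' i t) t := fun i t ht =>
      ((hφd t (hpos t ht)).const_mul (s i)).exp
    have hp' : ∀ i, ContinuousOn (p' i) (Set.uIcc x y) := fun i =>
      (hpc i).continuousOn.mul (continuousOn_const.mul (continuousOn_const.div
        (continuousOn_id.rpow_const fun t ht => .inl (hpos t ht).ne')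
        fun t ht => (Real.rpow_pos_of_pos (hpos t ht) γ).ne'))
    have hqc : ∀ i, Continuous (q i) := fun i =>
      (Complex.continuous_ofReal.comp (Real.continuous_exp.comp (continuous_const.mul hφc))).mul
        ((continuous_apply i).comp hvc)
    have hh : ∀ i, IntervalIntegrable (h i) volume x y := fun i => by
      have h1 := (integrable_kernel_mul_mulVec hR'm hr hRr (k := fun _ => 1) (C := 1)
        measurable_const (by simp) hvc hB i).2.2
      simp only [Complex.ofReal_one, one_mul] at h1
      exact (h1.intervalIntegrable (a := x) (b := y)).continuousOn_mul
        (Complex.continuous_ofReal.comp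
          (Real.continuous_exp.comp (continuous_const.mul hφc))).continuousOn
    have hpq : ∀ i t, (p i t : ℂ) * q i t = (Real.exp (τ * φ t) : ℂ) * v t i := fun i t => by
      have : Real.exp (τ * φ t) = p i t * Real.exp ((τ - s i) * φ t) := by
        rw [← Real.exp_add]
        ring_nf
      simp only [q, this]
      push_cast
      ring
    have hph : ∀ i t, (p i t : ℂ) * h i t = (Real.exp (τ * φ t) : ℂ) * (R' t *ᵥ v t) i :=
      fun i t => by
        have : Real.exp (τ * φ t) = p i t * Real.exp ((τ - s i) * φ t) := by
          rw [← Real.exp_add]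
          ring_nf
        simp only [h, this]
        push_cast
        ring
    let F : ℝ → Fin 2 → ℂ := fun t i => (p' i t : ℂ) * q i t + p i t * h i t
    have hFi : ∀ i, IntervalIntegrable (fun t => F t i) volume x y := fun i =>
      ((Complex.continuous_ofReal.comp_continuousOn (hp' i)).mul
        (hqc i).continuousOn).intervalIntegrable.add
        ((hh i).continuousOn_mul (Complex.continuous_ofReal.comp (hpc i)).continuousOn)
    have hF : IntervalIntegrable F volume x y :=
      ⟨Integrable.of_eval fun i => (hFi i).1, Integrable.of_eval fun i => (hFi i).2⟩
    have hFeq : ∀ t ∈ Set.uIcc x y,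
        ((((β / t ^ γ : ℝ) : ℂ) • (!![1,0;0,-1] : Matrix (Fin 2) (Fin 2) ℂ) + R t)).mulVec
          ((Real.exp (τ * φ t) : ℂ) • v t) = F t := fun t ht => by
      ext i
      have e1 : (p' i t : ℂ) * q i t =
          (s i : ℂ) * ((β / t ^ γ : ℝ) : ℂ) * ((Real.exp (τ * φ t) : ℂ) * v t i) := by
        rw [← hpq]
        simp only [p']
        push_cast
        ring
      simp only [F, e1, hph, hR' t (hpos t ht)]
      fin_cases i <;> simp [Matrix.mulVec, dotProduct, Fin.sum_univ_two, s] <;> ring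
    rw [intervalIntegral.integral_congr hFeq]
    ext i
    have hcomp : (∫ t in x..y, F t) i = ∫ t in x..y, F t i :=
      ((ContinuousLinearMap.proj (R := ℝ) (φ := fun _ : Fin 2 => ℂ) i).intervalIntegral_comp_comm
        hF).symm
    have key := integral_deriv_mul_add_mul (hp i) (hp' i) (hh i)
      (fun t _ => eq_add_of_sub_eq' (hv i x t))
    rw [Pi.add_apply, hcomp, key, hpq, hpq]
    simp
  · filter_upwards [eventually_gt_atTop 0] with x hx
    rw [← hφpos x hx, smul_smul, ← Complex.ofReal_mul, ← Real.exp_add, neg_add_cancel,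
      Real.exp_zero, Complex.ofReal_one, one_smul]

/-- Levinson-type theorem, special case: the system
`u′ = ((β/x^γ) diag(1,−1) + R(x)) u` with integrable remainder has an exponentially
growing solution asymptotic to `e₊` and an exponentially decaying solution asymptotic
to `e₋`.  Solutions are recorded in integral form. -/
theorem levinson_dichotomy (β γ : ℝ) (hβ : 0 < β) (hγ : γ ∈ Set.Ioo (1/2:ℝ) 1)
    (R : ℝ → Matrix (Fin 2) (Fin 2) ℂ)
    (hRmeas : ∀ i j, Measurable fun x => R x i j)
    (hRint : ∀ i j, IntegrableOn (fun x => R x i j) (Set.Ioi 0)) :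
    ∃ uP uM : ℝ → (Fin 2 → ℂ),
      (∀ x y : ℝ, 0 < x → 0 < y →
        uP y = uP x + ∫ t in x..y,
          ((((β / t ^ γ : ℝ) : ℂ) • (!![1,0;0,-1] : Matrix (Fin 2) (Fin 2) ℂ) + R t)).mulVec (uP t)) ∧
      (∀ x y : ℝ, 0 < x → 0 < y →
        uM y = uM x + ∫ t in x..y,
          ((((β / t ^ γ : ℝ) : ℂ) • (!![1,0;0,-1] : Matrix (Fin 2) (Fin 2) ℂ) + R t)).mulVec (uM t)) ∧
      Tendsto (fun x => ((Real.exp (-(β * x ^ (1-γ) / (1-γ))) : ℝ) : ℂ) • uP x)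
        atTop (𝓝 ![1,0]) ∧
      Tendsto (fun x => ((Real.exp (β * x ^ (1-γ) / (1-γ)) : ℝ) : ℂ) • uM x)
        atTop (𝓝 ![0,1]) := by
  obtain ⟨uP, hP, hPt⟩ := exists_levinson_solution hβ hγ.2 hRmeas hRint 1 ![1, 0]
    (fun i => by fin_cases i <;> simp)
  obtain ⟨uM, hM, hMt⟩ := exists_levinson_solution hβ hγ.2 hRmeas hRint (-1) ![0, 1]
    (fun i => by fin_cases i <;> simp)
  exact ⟨uP, uM, hP, hM, by simpa only [one_mul] using hPt,
    by simpa only [neg_one_mul, neg_neg] using hMt⟩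
end

section
/- Solutions have limits at infinity when ε₀ ≠ 0: Let β > 0, γ ∈ (1/2,1), ε₀ ∈ ℝ \ {0}, and let R : [0,∞) → M^{2×2}(ℂ) satisfy ‖R(x)‖ ≤ c_r/(x+1)^{1+α} with c_r, α > 0. Then every solution of u′(x) = ( (β/x^γ) M(ε₀ x) + R(x) ) u(x), where M(θ) = [[cos θ, sin θ],[sin θ, −cos θ]], has a finite limit as x → +∞, and the limit is nonzero for any nonzero solution. -/
open MeasureTheory Real Filter Topology

/-- `f` is a primitive on `[a, b]` of the bounded integrable function `g`. -/
def IsPrimitiveOn {E : Type*} [NormedAddCommGroup E] [NormedSpace ℝ E]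
    (f g : ℝ → E) (a b : ℝ) : Prop :=
  IntervalIntegrable g volume a b ∧ (∃ K, ∀ t ∈ Set.Icc a b, ‖g t‖ ≤ K) ∧
    ∀ x ∈ Set.Icc a b, f x = f a + ∫ t in a..x, g t

namespace IsPrimitiveOn

variable {E : Type*} [NormedAddCommGroup E] [NormedSpace ℝ E] {f g : ℝ → E} {a b : ℝ}

theorem absolutelyContinuous (h : IsPrimitiveOn f g a b) (hab : a ≤ b) :
    AbsolutelyContinuousOnInterval f a b := by
  obtain ⟨hgi, ⟨K, hK⟩, hf⟩ := h
  have hK0 : 0 ≤ K := (norm_nonneg _).trans (hK a ⟨le_rfl, hab⟩)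
  have hmono : ∀ x ∈ Set.Icc a b, ∀ y ∈ Set.Icc a b, IntervalIntegrable g volume x y :=
    fun x hx y hy => hgi.mono_set (by
      rw [Set.uIcc_of_le hab]; exact Set.uIcc_subset_Icc hx hy)
  have ha : a ∈ Set.Icc a b := ⟨le_rfl, hab⟩
  refine LipschitzOnWith.absolutelyContinuousOnInterval (K := ⟨K, hK0⟩) ?_
  rw [Set.uIcc_of_le hab]
  refine LipschitzOnWith.of_dist_le_mul fun x hx y hy => ?_
  rw [dist_eq_norm, hf x hx, hf y hy, add_sub_add_left_eq_sub,
    intervalIntegral.integral_interval_sub_left (hmono a ha x hx) (hmono a ha y hy), dist_eq_norm,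
    Real.norm_eq_abs]
  refine intervalIntegral.norm_integral_le_of_norm_le_const fun t ht => hK t ?_
  exact Set.uIcc_subset_Icc hy hx (Set.uIoc_subset_uIcc ht)

theorem ae_hasDerivAt [CompleteSpace E] (h : IsPrimitiveOn f g a b) (hab : a ≤ b) :
    ∀ᵐ x, x ∈ Set.uIcc a b → HasDerivAt f (g x) x := by
  obtain ⟨hgi, -, hf⟩ := h
  have h₁ : ∀ᵐ x : ℝ, x ≠ a := by simp [ae_iff, measure_singleton]
  have h₂ : ∀ᵐ x : ℝ, x ≠ b := by simp [ae_iff, measure_singleton]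
  filter_upwards [hgi.ae_hasDerivAt_integral, h₁, h₂] with x hx hxa hxb hxI
  have := (hx hxI a Set.left_mem_uIcc).const_add (f a)
  rw [Set.uIcc_of_le hab] at hxI
  refine this.congr_of_eventuallyEq ?_
  filter_upwards [Icc_mem_nhds (lt_of_le_of_ne hxI.1 hxa.symm) (lt_of_le_of_ne hxI.2 hxb)]
    with y hy using hf y hy

theorem of_hasDerivAt [CompleteSpace E] (hab : a ≤ b)
    (hf : ∀ t ∈ Set.Icc a b, HasDerivAt f (g t) t) (hg : ContinuousOn g (Set.Icc a b)) :
    IsPrimitiveOn f g a b := by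
  have hgi : IntervalIntegrable g volume a b :=
    ContinuousOn.intervalIntegrable (by rwa [Set.uIcc_of_le hab])
  refine ⟨hgi, isCompact_Icc.exists_bound_of_continuousOn hg, fun x hx => ?_⟩
  have hsub : Set.uIcc a x ⊆ Set.Icc a b := Set.uIcc_subset_Icc ⟨le_rfl, hab⟩ hx
  rw [intervalIntegral.integral_eq_sub_of_hasDerivAt (fun t ht => hf t (hsub ht))
    (hgi.mono_set (by rwa [Set.uIcc_of_le hab]))]
  abel

/-- The product rule, integrated. -/
theorem smul [CompleteSpace E] (h : IsPrimitiveOn f g a b) (hab : a ≤ b) {p p' : ℝ → ℝ}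
    (hp : ∀ t ∈ Set.Icc a b, HasDerivAt p (p' t) t) (hp' : ContinuousOn p' (Set.Icc a b)) :
    IsPrimitiveOn (fun t => p t • f t) (fun t => p' t • f t + p t • g t) a b := by
  have hI := Set.uIcc_of_le hab
  have hP := of_hasDerivAt hab hp hp'
  have hfAC := h.absolutelyContinuous hab
  have hpAC := hP.absolutelyContinuous hab
  have hfc := hI ▸ hfAC.continuousOn
  have hpc := hI ▸ hpAC.continuousOn
  have hint : IntervalIntegrable (fun t => p' t • f t + p t • g t) volume a b :=
    (ContinuousOn.intervalIntegrable (by rw [hI]; exact hp'.smul hfc)).add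
      (h.1.continuousOn_smul (by rwa [hI]))
  have hbdd : ∃ K, ∀ t ∈ Set.Icc a b, ‖p' t • f t + p t • g t‖ ≤ K := by
    obtain ⟨K, hK⟩ := h.2.1
    obtain ⟨K₁, hK₁⟩ := isCompact_Icc.exists_bound_of_continuousOn (hp'.smul hfc)
    obtain ⟨K₂, hK₂⟩ := isCompact_Icc.exists_bound_of_continuousOn hpc
    refine ⟨K₁ + K₂ * K, fun t ht => (norm_add_le _ _).trans (add_le_add (hK₁ t ht) ?_)⟩
    rw [norm_smul]
    exact mul_le_mul (hK₂ t ht) (hK t ht) (norm_nonneg _) ((norm_nonneg _).trans (hK₂ t ht))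
  refine ⟨hint, hbdd, fun x hx => ?_⟩
  have hQ : IsPrimitiveOn (fun x => ∫ t in a..x, (p' t • f t + p t • g t))
      (fun t => p' t • f t + p t • g t) a b := ⟨hint, hbdd, fun x _ => by simp⟩
  obtain ⟨c, hc⟩ := ((hpAC.fun_smul hfAC).sub
    (hQ.absolutelyContinuous hab)).const_of_ae_hasDerivAt_zero (by
      filter_upwards [h.ae_hasDerivAt hab, hQ.ae_hasDerivAt hab] with x h₁ h₂ hx
      convert! ((hp x (hI ▸ hx)).smul (h₁ hx)).sub (h₂ hx) using 1
      abel)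
  have hx' := hc x (hI ▸ hx)
  have ha' := hc a Set.left_mem_uIcc
  simp only [Pi.sub_apply, intervalIntegral.integral_same, sub_zero] at hx' ha'
  beta_reduce
  rw [ha', ← hx']
  abel

/-- If adding small multiples of `f₁` and `f₂` to `f` leaves a function whose derivative decays
integrably, then the oscillation of `f` is small. -/
theorem norm_sub_le_of_correction [CompleteSpace E] {f₁ f₂ g₁ g₂ : ℝ → E} {p p' q q' : ℝ → ℝ}
    {B C δ : ℝ} (ha : 0 < a) (hab : a ≤ b) (hδ : 0 < δ) (hC : 0 ≤ C)
    (h : IsPrimitiveOn f g a b) (h₁ : IsPrimitiveOn f₁ g₁ a b) (h₂ : IsPrimitiveOn f₂ g₂ a b)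
    (hp : ∀ t ∈ Set.Icc a b, HasDerivAt p (p' t) t) (hp' : ContinuousOn p' (Set.Icc a b))
    (hq : ∀ t ∈ Set.Icc a b, HasDerivAt q (q' t) t) (hq' : ContinuousOn q' (Set.Icc a b))
    (hB₁ : ∀ t ∈ Set.Icc a b, ‖p t • f₁ t‖ ≤ B) (hB₂ : ∀ t ∈ Set.Icc a b, ‖q t • f₂ t‖ ≤ B)
    (hbound : ∀ t ∈ Set.Icc a b,
      ‖g t + (p' t • f₁ t + p t • g₁ t) + (q' t • f₂ t + q t • g₂ t)‖ ≤ C * t ^ (-(1 + δ))) :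
    ‖f b - f a‖ ≤ C * (a ^ (-δ) / δ) + 4 * B := by
  have hb : b ∈ Set.Icc a b := ⟨hab, le_rfl⟩
  have ha' : a ∈ Set.Icc a b := ⟨le_rfl, hab⟩
  have k₁ := h₁.smul hab hp hp'
  have k₂ := h₂.smul hab hq hq'
  have e := h.2.2 b hb
  have e₁ := k₁.2.2 b hb
  have e₂ := k₂.2.2 b hb
  beta_reduce at e₁ e₂
  have hnot : (0 : ℝ) ∉ Set.uIcc a b := by
    rw [Set.uIcc_of_le hab]; exact fun h0 => absurd h0.1 (not_le.mpr ha)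
  have hint : ‖∫ t in a..b,
      (g t + (p' t • f₁ t + p t • g₁ t) + (q' t • f₂ t + q t • g₂ t))‖
      ≤ C * (a ^ (-δ) / δ) := by
    refine (intervalIntegral.norm_integral_le_of_norm_le hab
      (g := fun t => C * t ^ (-(1 + δ))) (ae_of_all _ fun t ht => hbound t ⟨ht.1.le, ht.2⟩)
      ((intervalIntegral.intervalIntegrable_rpow (Or.inr hnot)).const_mul C)).trans ?_
    rw [intervalIntegral.integral_const_mul,
      integral_rpow (Or.inr ⟨by linarith, hnot⟩)]
    refine mul_le_mul_of_nonneg_left ?_ hC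
    have : -(1 + δ) + 1 = -δ := by ring
    rw [this, div_neg, ← neg_div]
    gcongr
    have := Real.rpow_nonneg (ha.le.trans hab) (-δ)
    linarith
  rw [intervalIntegral.integral_add (h.1.add k₁.1) k₂.1,
    intervalIntegral.integral_add h.1 k₁.1] at hint
  have key : f b - f a = ((∫ t in a..b, g t) + (∫ t in a..b, (p' t • f₁ t + p t • g₁ t))
      + ∫ t in a..b, (q' t • f₂ t + q t • g₂ t))
      - p b • f₁ b + p a • f₁ a - q b • f₂ b + q a • f₂ a := by
    rw [e₁, e₂, e]; abel
  rw [key]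
  have n₁ := norm_add_le (((∫ t in a..b, g t) + (∫ t in a..b, (p' t • f₁ t + p t • g₁ t))
      + ∫ t in a..b, (q' t • f₂ t + q t • g₂ t))
      - p b • f₁ b + p a • f₁ a - q b • f₂ b) (q a • f₂ a)
  have n₂ := norm_sub_le (((∫ t in a..b, g t) + (∫ t in a..b, (p' t • f₁ t + p t • g₁ t))
      + ∫ t in a..b, (q' t • f₂ t + q t • g₂ t))
      - p b • f₁ b + p a • f₁ a) (q b • f₂ b)
  have n₃ := norm_add_le (((∫ t in a..b, g t) + (∫ t in a..b, (p' t • f₁ t + p t • g₁ t))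
      + ∫ t in a..b, (q' t • f₂ t + q t • g₂ t))
      - p b • f₁ b) (p a • f₁ a)
  have n₄ := norm_sub_le ((∫ t in a..b, g t) + (∫ t in a..b, (p' t • f₁ t + p t • g₁ t))
      + ∫ t in a..b, (q' t • f₂ t + q t • g₂ t)) (p b • f₁ b)
  linarith [hB₁ a ha', hB₁ b hb, hB₂ a ha', hB₂ b hb]

end IsPrimitiveOn

section Stability

variable {E : Type*} [NormedAddCommGroup E] {f : ℝ → E}

theorem norm_sub_le_half_of_oscillation_le {a b : ℝ} (hf : ContinuousOn f (Set.Icc a b))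
    (H : ∀ M, (∀ t ∈ Set.Icc a b, ‖f t‖ ≤ M) →
      ∀ x ∈ Set.Icc a b, ∀ y ∈ Set.Icc a b, ‖f y - f x‖ ≤ 1 / 4 * M) :
    ∀ x ∈ Set.Icc a b, ∀ y ∈ Set.Icc a b, ‖f y - f x‖ ≤ ‖f x‖ / 2 := by
  intro x hx y hy
  obtain ⟨z, hz, hmax⟩ := isCompact_Icc.exists_isMaxOn ⟨x, hx⟩ hf.norm
  have h := H ‖f z‖ (fun t ht => hmax ht)
  have h₁ := h x hx y hy
  have h₂ := h x hx z hz
  have h₃ := norm_le_insert' (f z) (f x)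
  linarith [norm_nonneg (f z), norm_nonneg (f x)]

theorem exists_tendsto_of_oscillation_le [CompleteSpace E] (hf : ContinuousOn f (Set.Ioi 0))
    (H : ∀ η > 0, ∀ᶠ X in atTop, ∀ Y M, (∀ t ∈ Set.Icc X Y, ‖f t‖ ≤ M) →
      ∀ x ∈ Set.Icc X Y, ∀ y ∈ Set.Icc X Y, ‖f y - f x‖ ≤ η * M) :
    ∃ L, Tendsto f atTop (𝓝 L) ∧ (L = 0 → ∃ x, 0 < x ∧ f x = 0) := by
  obtain ⟨X, hXH, hX⟩ := ((H (1 / 4) (by norm_num)).and (eventually_gt_atTop 0)).exists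
  have hhalf : ∀ y ≥ X, ‖f y - f X‖ ≤ ‖f X‖ / 2 := fun y hy =>
    norm_sub_le_half_of_oscillation_le (hf.mono fun t ht => hX.trans_le ht.1) (hXH y)
      X ⟨le_rfl, hy⟩ y ⟨hy, le_rfl⟩
  have hbd : ∀ y ≥ X, ‖f y‖ ≤ 2 * ‖f X‖ + 1 := fun y hy => by
    have := norm_le_insert' (f y) (f X)
    linarith [hhalf y hy, norm_nonneg (f X)]
  have hpos : 0 < 2 * ‖f X‖ + 1 := by positivity
  have hcauchy : CauchySeq f := by
    rw [Metric.cauchySeq_iff']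
    intro ε hε
    obtain ⟨X', hX', hXX'⟩ := ((H (ε / 2 / (2 * ‖f X‖ + 1)) (by positivity)).and
      (eventually_ge_atTop X)).exists
    refine ⟨X', fun y hy => ?_⟩
    have := hX' y (2 * ‖f X‖ + 1) (fun t ht => hbd t (hXX'.trans ht.1)) X' ⟨le_rfl, hy⟩ y
      ⟨hy, le_rfl⟩
    rw [div_mul_cancel₀ _ hpos.ne'] at this
    rw [dist_eq_norm]
    linarith
  obtain ⟨L, hL⟩ := cauchySeq_tendsto_of_complete hcauchy
  refine ⟨L, hL, fun h0 => ⟨X, hX, ?_⟩⟩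
  have := le_of_tendsto (hL.sub_const (f X)).norm
    (eventually_atTop.mpr ⟨X, fun y hy => hhalf y hy⟩)
  rw [h0, zero_sub, norm_neg] at this
  exact norm_le_zero_iff.mp (by linarith)

theorem ne_zero_of_local_bound (hf : ContinuousOn f (Set.Ioi 0))
    (H : ∀ x > 0, ∃ r > 0, ∀ y > 0, |y - x| < r → ‖f x - f y‖ ≤ ‖f y‖ / 2)
    (hne : ∃ x, 0 < x ∧ f x ≠ 0) : ∀ x, 0 < x → f x ≠ 0 := by
  obtain ⟨x₀, hx₀, hfx₀⟩ := hne
  have hopen : IsOpen (Set.Ioi (0 : ℝ) ∩ f ⁻¹' {0}ᶜ) :=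
    hf.isOpen_inter_preimage isOpen_Ioi isOpen_compl_singleton
  have := isPreconnected_Ioi.subset_of_closure_inter_subset (s := Set.Ioi (0 : ℝ)) hopen
    ⟨x₀, hx₀, hx₀, hfx₀⟩ (by
      rintro x ⟨hx, hx0⟩
      refine ⟨hx0, fun hfx => ?_⟩
      obtain ⟨r, hr, hrH⟩ := H x hx0
      obtain ⟨y, hy, hyr⟩ := Metric.mem_closure_iff.mp hx r hr
      rw [dist_comm, Real.dist_eq] at hyr
      have h := hrH y hy.1 hyr
      rw [Set.mem_singleton_iff.mp hfx, zero_sub, norm_neg] at h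
      exact hy.2 (norm_le_zero_iff.mp (by linarith)))
  exact fun x hx => (this hx).2

end Stability

section OscillatingSystem

theorem norm_smul_add_smul_le {E : Type*} [SeminormedAddCommGroup E] [NormedSpace ℝ E] {c s M : ℝ}
    (hc : |c| ≤ 1) (hs : |s| ≤ 1) {z w : E} (hz : ‖z‖ ≤ M) (hw : ‖w‖ ≤ M) :
    ‖c • z + s • w‖ ≤ 2 * M := by
  have h₁ : ‖c • z‖ ≤ M := by
    rw [norm_smul, Real.norm_eq_abs]
    exact (mul_le_of_le_one_left (norm_nonneg _) hc).trans hz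
  have h₂ : ‖s • w‖ ≤ M := by
    rw [norm_smul, Real.norm_eq_abs]
    exact (mul_le_of_le_one_left (norm_nonneg _) hs).trans hw
  linarith [norm_add_le (c • z) (s • w)]

theorem hasDerivAt_rpow_mul_sin (κ γ ε₀ : ℝ) {t : ℝ} (ht : 0 < t) :
    HasDerivAt (fun t => κ * t ^ (-γ) * Real.sin (ε₀ * t))
      (-(γ * κ) * t ^ (-γ - 1) * Real.sin (ε₀ * t) + κ * ε₀ * t ^ (-γ) * Real.cos (ε₀ * t)) t := by
  have h₁ := (Real.hasDerivAt_rpow_const (p := -γ) (Or.inl ht.ne')).const_mul κ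
  have h₂ := ((hasDerivAt_id t).const_mul ε₀).sin
  convert! h₁.mul h₂ using 1
  simp only [id]
  ring

theorem hasDerivAt_rpow_mul_cos (κ γ ε₀ : ℝ) {t : ℝ} (ht : 0 < t) :
    HasDerivAt (fun t => κ * t ^ (-γ) * Real.cos (ε₀ * t))
      (-(γ * κ) * t ^ (-γ - 1) * Real.cos (ε₀ * t) - κ * ε₀ * t ^ (-γ) * Real.sin (ε₀ * t)) t := by
  have h₁ := (Real.hasDerivAt_rpow_const (p := -γ) (Or.inl ht.ne')).const_mul κ
  have h₂ := ((hasDerivAt_id t).const_mul ε₀).cos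
  convert! h₁.mul h₂ using 1
  simp only [id]
  ring

/-- The error terms left after the first-order correction. -/
theorem norm_corrected_le {E : Type*} [SeminormedAddCommGroup E] [NormedSpace ℝ E]
    {κ γ ρ β c s P D τ M : ℝ} (hγ : 0 ≤ γ) (hβ : 0 ≤ β)
    (hρ : 0 ≤ ρ) (hM : 0 ≤ M) (hP : 0 ≤ P) (hP1 : P ≤ 1) (hPτ : P * P ≤ τ) (hD : 0 ≤ D)
    (hDτ : D ≤ τ) (hc : |c| ≤ 1) (hs : |s| ≤ 1) {z w r gz gw : E} (hz : ‖z‖ ≤ M) (hw : ‖w‖ ≤ M)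
    (hr : ‖r‖ ≤ ρ * τ * M) (hgz : ‖gz‖ ≤ (2 * β * P + ρ * τ) * M)
    (hgw : ‖gw‖ ≤ (2 * β * P + ρ * τ) * M) :
    ‖r + (γ * κ * D) • (c • z + s • w) + (κ * P) • (c • gz + s • gw)‖
      ≤ (ρ + 2 * γ * |κ| + 4 * |κ| * β + 2 * |κ| * ρ) * M * τ := by
  have hτ : 0 ≤ τ := hD.trans hDτ
  have h₁ : ‖(γ * κ * D) • (c • z + s • w)‖ ≤ γ * |κ| * τ * (2 * M) := by
    rw [norm_smul, Real.norm_eq_abs, abs_mul, abs_mul, abs_of_nonneg hγ, abs_of_nonneg hD]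
    gcongr
    exact norm_smul_add_smul_le hc hs hz hw
  have h₂ : ‖(κ * P) • (c • gz + s • gw)‖ ≤ |κ| * (P * (2 * ((2 * β * P + ρ * τ) * M))) := by
    rw [norm_smul, Real.norm_eq_abs, abs_mul, abs_of_nonneg hP, mul_assoc]
    gcongr
    exact norm_smul_add_smul_le hc hs hgz hgw
  have h₃ : P * (2 * ((2 * β * P + ρ * τ) * M)) ≤ 4 * β * M * τ + 2 * ρ * M * τ := by
    have e₁ : 4 * β * M * (P * P) ≤ 4 * β * M * τ := by gcongr
    have e₂ : 2 * ρ * M * τ * P ≤ 2 * ρ * M * τ := mul_le_of_le_one_right (by positivity) hP1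
    linarith
  have h₄ := mul_le_mul_of_nonneg_left h₃ (abs_nonneg κ)
  have h₅ := norm_add₃_le (a := r) (b := (γ * κ * D) • (c • z + s • w))
    (c := (κ * P) • (c • gz + s • gw))
  linarith

theorem eventually_oscillation_le {E : Type*} [NormedAddCommGroup E] [NormedSpace ℝ E]
    [CompleteSpace E] {β γ ε₀ ρ α : ℝ} (hβ : 0 ≤ β) (hγ : 1 / 2 < γ)
    (hε₀ : ε₀ ≠ 0) (hα : 0 < α) (hρ : 0 ≤ ρ) {u₀ u₁ g₀ g₁ r₀ r₁ : ℝ → E}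
    (h₀ : ∀ a b, 0 < a → a ≤ b → IsPrimitiveOn u₀ g₀ a b)
    (h₁ : ∀ a b, 0 < a → a ≤ b → IsPrimitiveOn u₁ g₁ a b)
    (hg₀ : ∀ t, 0 < t → g₀ t = (β * t ^ (-γ)) •
      (Real.cos (ε₀ * t) • u₀ t + Real.sin (ε₀ * t) • u₁ t) + r₀ t)
    (hg₁ : ∀ t, 0 < t → g₁ t = (β * t ^ (-γ)) •
      (Real.sin (ε₀ * t) • u₀ t + (-Real.cos (ε₀ * t)) • u₁ t) + r₁ t)
    (hr : ∀ t, 0 < t → ∀ M, ‖u₀ t‖ ≤ M → ‖u₁ t‖ ≤ M →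
      ‖r₀ t‖ ≤ ρ * t ^ (-(1 + α)) * M ∧ ‖r₁ t‖ ≤ ρ * t ^ (-(1 + α)) * M) :
    ∀ η > 0, ∀ᶠ X in atTop, ∀ Y M, (∀ t ∈ Set.Icc X Y, ‖u₀ t‖ ≤ M ∧ ‖u₁ t‖ ≤ M) →
      ∀ x ∈ Set.Icc X Y, ∀ y ∈ Set.Icc X Y,
        ‖u₀ y - u₀ x‖ ≤ η * M ∧ ‖u₁ y - u₁ x‖ ≤ η * M := by
  intro η hη
  set κ := β / ε₀
  have hκβ : κ * ε₀ = β := div_mul_cancel₀ _ hε₀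
  obtain ⟨δ, hδ, hδα, hδγ, hδγ'⟩ : ∃ δ > 0, δ ≤ α ∧ δ ≤ 2 * γ - 1 ∧ δ ≤ γ :=
    ⟨min α (min (2 * γ - 1) γ), by simp only [gt_iff_lt, lt_min_iff]; grind, by simp⟩
  set C := ρ + 2 * γ * |κ| + 4 * |κ| * β + 2 * |κ| * ρ
  have hC : 0 ≤ C := by positivity
  have hlim : Tendsto (fun x : ℝ => C * (x ^ (-δ) / δ) + 4 * (|κ| * x ^ (-γ))) atTop (𝓝 0) := by
    have := (((tendsto_rpow_neg_atTop hδ).div_const δ).const_mul C).add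
      (((tendsto_rpow_neg_atTop (by linarith : 0 < γ)).const_mul |κ|).const_mul 4)
    simpa using this
  filter_upwards [eventually_forall_ge_atTop.mpr (hlim.eventually_le_const hη), eventually_ge_atTop 1]
    with X hX hX1 Y M hM x hx y hy
  wlog hxy : x ≤ y generalizing x y
  · have := this y hy x hx (le_of_not_ge hxy)
    rwa [norm_sub_rev, norm_sub_rev (u₁ y)]
  have hx1 : 1 ≤ x := hX1.trans hx.1
  have hx0 : 0 < x := by linarith
  have hsub : ∀ t ∈ Set.Icc x y, t ∈ Set.Icc X Y ∧ 0 < t ∧ 1 ≤ t := fun t ht =>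
    ⟨⟨hx.1.trans ht.1, ht.2.trans hy.2⟩, by linarith [ht.1], hx1.trans ht.1⟩
  have hM0 : 0 ≤ M := (norm_nonneg _).trans (hM x hx).1
  have hfin : C * M * (x ^ (-δ) / δ) + 4 * (|κ| * x ^ (-γ) * M) ≤ η * M := by
    have := mul_le_mul_of_nonneg_right (hX x hx.1) hM0
    linarith
  have hps : ContinuousOn (fun t => -(γ * κ) * t ^ (-γ - 1) * Real.sin (ε₀ * t)
      + κ * ε₀ * t ^ (-γ) * Real.cos (ε₀ * t)) (Set.Icc x y) := fun t ht => by
    have := (hsub t ht).2.1.ne'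
    exact ContinuousAt.continuousWithinAt (by fun_prop (disch := simp [this]))
  have hqs : ContinuousOn (fun t => -(γ * κ) * t ^ (-γ - 1) * Real.cos (ε₀ * t)
      - κ * ε₀ * t ^ (-γ) * Real.sin (ε₀ * t)) (Set.Icc x y) := fun t ht => by
    have := (hsub t ht).2.1.ne'
    exact ContinuousAt.continuousWithinAt (by fun_prop (disch := simp [this]))
  have hB : ∀ t ∈ Set.Icc x y, ∀ c : ℝ, |c| ≤ 1 → ∀ z : E, ‖z‖ ≤ M →
      ‖(κ * t ^ (-γ) * c) • z‖ ≤ |κ| * x ^ (-γ) * M := fun t ht c hc z hz => by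
    have ht0 := (hsub t ht).2.1
    rw [norm_smul, Real.norm_eq_abs, abs_mul, abs_mul, abs_of_nonneg (Real.rpow_nonneg ht0.le _)]
    have : t ^ (-γ) ≤ x ^ (-γ) := Real.rpow_le_rpow_of_nonpos hx0 ht.1 (by linarith)
    have hx' := Real.rpow_nonneg hx0.le (-γ)
    calc |κ| * t ^ (-γ) * |c| * ‖z‖ ≤ |κ| * x ^ (-γ) * 1 * M := by gcongr
      _ = _ := by ring
  have hpt : ∀ t ∈ Set.Icc x y, ∀ c s : ℝ, |c| ≤ 1 → |s| ≤ 1 → ∀ r, ‖r‖ ≤ ρ * t ^ (-(1 + α)) * M →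
      ‖r + (γ * κ * t ^ (-γ - 1)) • (c • u₀ t + s • u₁ t)
        + (κ * t ^ (-γ)) • ((-c) • g₀ t + (-s) • g₁ t)‖ ≤ C * M * t ^ (-(1 + δ)) := by
    intro t ht c s hc hs r hrb
    obtain ⟨htI, ht0, ht1⟩ := hsub t ht
    have hP : 0 ≤ t ^ (-γ) := Real.rpow_nonneg ht0.le _
    have hατ : t ^ (-(1 + α)) ≤ t ^ (-(1 + δ)) :=
      Real.rpow_le_rpow_of_exponent_le ht1 (by linarith)
    have hrτ : ∀ r : E, ‖r‖ ≤ ρ * t ^ (-(1 + α)) * M → ‖r‖ ≤ ρ * t ^ (-(1 + δ)) * M :=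
      fun r hr => hr.trans (by gcongr)
    have hg : ∀ c s : ℝ, |c| ≤ 1 → |s| ≤ 1 → ∀ r : E, ‖r‖ ≤ ρ * t ^ (-(1 + α)) * M →
        ‖-((β * t ^ (-γ)) • (c • u₀ t + s • u₁ t) + r)‖
          ≤ (2 * β * t ^ (-γ) + ρ * t ^ (-(1 + δ))) * M := by
      intro c s hc hs r hr
      rw [norm_neg]
      have h := mul_le_mul_of_nonneg_left
        (norm_smul_add_smul_le hc hs (hM t htI).1 (hM t htI).2) (mul_nonneg hβ hP)
      refine (norm_add_le _ _).trans ?_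
      rw [norm_smul, Real.norm_of_nonneg (mul_nonneg hβ hP)]
      linarith [hrτ r hr]
    have hrM := hr t ht0 M (hM t htI).1 (hM t htI).2
    have hcos := Real.abs_cos_le_one (ε₀ * t)
    have hsin := Real.abs_sin_le_one (ε₀ * t)
    rw [neg_smul, neg_smul, ← smul_neg, ← smul_neg]
    refine norm_corrected_le (by linarith : 0 ≤ γ) hβ hρ hM0 hP
      (Real.rpow_le_one_of_one_le_of_nonpos ht1 (by linarith)) ?_ (Real.rpow_nonneg ht0.le (-γ - 1))
      (Real.rpow_le_rpow_of_exponent_le ht1 (by linarith : -γ - 1 ≤ -(1 + δ))) hc hs (hM t htI).1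
      (hM t htI).2 (hrτ r hrb) (hg₀ t ht0 ▸ hg _ _ hcos hsin _ hrM.1)
      (hg₁ t ht0 ▸ hg _ _ hsin (by rwa [abs_neg]) _ hrM.2)
    rw [← Real.rpow_add ht0]
    exact Real.rpow_le_rpow_of_exponent_le ht1 (by linarith)
  constructor
  · refine (IsPrimitiveOn.norm_sub_le_of_correction hx0 hxy hδ (by positivity)
      (h₀ x y hx0 hxy) (h₀ x y hx0 hxy) (h₁ x y hx0 hxy)
      (fun t ht => (hasDerivAt_rpow_mul_sin κ γ ε₀ (hsub t ht).2.1).neg) hps.neg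
      (fun t ht => hasDerivAt_rpow_mul_cos κ γ ε₀ (hsub t ht).2.1) hqs
      (fun t ht => ?_) (fun t ht => hB t ht _ (Real.abs_cos_le_one _) _ (hM t (hsub t ht).1).2)
      (fun t ht => ?_)).trans hfin
    · rw [Pi.neg_apply, neg_smul, norm_neg]
      exact hB t ht _ (Real.abs_sin_le_one _) _ (hM t (hsub t ht).1).1
    · convert hpt t ht (Real.sin (ε₀ * t)) (-Real.cos (ε₀ * t)) (Real.abs_sin_le_one _)
        (by rw [abs_neg]; exact Real.abs_cos_le_one _) (r₀ t)
        (hr t (hsub t ht).2.1 M (hM t (hsub t ht).1).1 (hM t (hsub t ht).1).2).1 using 2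
      nth_rw 1 [hg₀ t (hsub t ht).2.1]
      simp only [Pi.neg_apply, hκβ]
      module
  · refine (IsPrimitiveOn.norm_sub_le_of_correction hx0 hxy hδ (by positivity)
      (h₁ x y hx0 hxy) (h₀ x y hx0 hxy) (h₁ x y hx0 hxy)
      (fun t ht => hasDerivAt_rpow_mul_cos κ γ ε₀ (hsub t ht).2.1) hqs
      (fun t ht => hasDerivAt_rpow_mul_sin κ γ ε₀ (hsub t ht).2.1) hps
      (fun t ht => hB t ht _ (Real.abs_cos_le_one _) _ (hM t (hsub t ht).1).1)
      (fun t ht => hB t ht _ (Real.abs_sin_le_one _) _ (hM t (hsub t ht).1).2)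
      (fun t ht => ?_)).trans hfin
    convert hpt t ht (-Real.cos (ε₀ * t)) (-Real.sin (ε₀ * t))
      (by rw [abs_neg]; exact Real.abs_cos_le_one _)
      (by rw [abs_neg]; exact Real.abs_sin_le_one _) (r₁ t)
      (hr t (hsub t ht).2.1 M (hM t (hsub t ht).1).1 (hM t (hsub t ht).1).2).2 using 2
    nth_rw 1 [hg₁ t (hsub t ht).2.1]
    simp only [hκβ]
    module

end OscillatingSystem

section LinearSystem

open Matrix

variable {A : ℝ → Matrix (Fin 2) (Fin 2) ℂ} {u : ℝ → Fin 2 → ℂ}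

theorem norm_mulVec_apply_le {B : Matrix (Fin 2) (Fin 2) ℂ} {K M : ℝ}
    (hB : ∀ i j, ‖B i j‖ ≤ K) {v : Fin 2 → ℂ} (hv : ∀ j, ‖v j‖ ≤ M) (i : Fin 2) :
    ‖(B *ᵥ v) i‖ ≤ 2 * K * M := by
  rw [mulVec, dotProduct, Fin.sum_univ_two]
  have hK : 0 ≤ K := (norm_nonneg _).trans (hB 0 0)
  have h : ∀ j, ‖B i j * v j‖ ≤ K * M := fun j => by
    rw [norm_mul]
    exact mul_le_mul (hB i j) (hv j) (norm_nonneg _) hK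
  linarith [norm_add_le (B i 0 * v 0) (B i 1 * v 1), h 0, h 1]

theorem norm_mulVec_le_of_forall {B : Matrix (Fin 2) (Fin 2) ℂ} {K M : ℝ}
    (hB : ∀ i j, ‖B i j‖ ≤ K) {v : Fin 2 → ℂ} (hv : ‖v‖ ≤ M) : ‖B *ᵥ v‖ ≤ 2 * K * M := by
  have hK : 0 ≤ K := (norm_nonneg _).trans (hB 0 0)
  have hM : 0 ≤ M := (norm_nonneg _).trans hv
  exact (pi_norm_le_iff_of_nonneg (by positivity)).mpr
    (norm_mulVec_apply_le hB fun j => (norm_le_pi_norm v j).trans hv)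

theorem exists_norm_mulVec_bound (hbdd : ∀ a > 0, ∃ K, ∀ t ≥ a, ∀ i j, ‖A t i j‖ ≤ K)
    {a : ℝ} (ha : 0 < a) :
    ∃ K, 0 ≤ K ∧ ∀ t ≥ a, ∀ v M, ‖v‖ ≤ M → ‖A t *ᵥ v‖ ≤ 2 * K * M := by
  obtain ⟨K, hK⟩ := hbdd a ha
  exact ⟨K, (norm_nonneg _).trans (hK a le_rfl 0 0),
    fun t ht v M hv => norm_mulVec_le_of_forall (hK t ht) hv⟩

/-- The integral equation alone forces the integrand to be integrable: if it were not, the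
solution would be constant, and then the integrand would be bounded. -/
theorem intervalIntegrable_mulVec_of_integral_eq
    (hmeas : ∀ i j, Measurable fun t => A t i j)
    (hbdd : ∀ a > 0, ∃ K, ∀ t ≥ a, ∀ i j, ‖A t i j‖ ≤ K)
    (hu : ∀ x y, 0 < x → 0 < y → u y = u x + ∫ t in x..y, A t *ᵥ u t)
    {x y : ℝ} (hx : 0 < x) (hy : 0 < y) :
    IntervalIntegrable (fun t => A t *ᵥ u t) volume x y := by
  by_contra hxy
  have hconst : ∀ z, 0 < z → u z = u x := by
    intro z hz
    by_cases h : IntervalIntegrable (fun t => A t *ᵥ u t) volume x z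
    · have h' : ¬ IntervalIntegrable (fun t => A t *ᵥ u t) volume z y :=
        fun h' => hxy (h.trans h')
      have e₁ := hu z y hz hy
      have e₂ := hu x y hx hy
      rw [intervalIntegral.integral_undef h', add_zero] at e₁
      rw [intervalIntegral.integral_undef hxy, add_zero] at e₂
      rw [← e₁, e₂]
    · rw [hu x z hx hz, intervalIntegral.integral_undef h, add_zero]
  obtain ⟨K, -, hK⟩ := exists_norm_mulVec_bound hbdd (lt_min hx hy)
  have hm : Measurable fun t => A t *ᵥ u x := by
    refine measurable_pi_iff.mpr fun i => ?_
    simp only [mulVec, dotProduct, Fin.sum_univ_two]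
    exact ((hmeas i 0).mul_const _).add ((hmeas i 1).mul_const _)
  have hle : ∀ t ∈ Set.uIoc x y, min x y ≤ t := fun t ht => ht.1.le
  refine hxy (intervalIntegrable_iff.mpr ?_)
  refine IntegrableOn.congr_fun (f := fun t => A t *ᵥ u x) ?_
    (fun t ht => by simp only [hconst t ((lt_min hx hy).trans_le (hle t ht))])
    measurableSet_uIoc
  refine Measure.integrableOn_of_bounded (M := 2 * K * ‖u x‖) (by simp [Set.uIoc])
    hm.aestronglyMeasurable ?_
  exact (ae_restrict_iff' measurableSet_uIoc).mpr
    (ae_of_all _ fun t ht => hK t (hle t ht) _ _ le_rfl)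

theorem continuousOn_of_integral_eq
    (hint : ∀ x y, 0 < x → 0 < y → IntervalIntegrable (fun t => A t *ᵥ u t) volume x y)
    (hu : ∀ x y, 0 < x → 0 < y → u y = u x + ∫ t in x..y, A t *ᵥ u t) :
    ContinuousOn u (Set.Ioi 0) := by
  intro x hx
  have hx : 0 < x := hx
  have hab : x / 2 ≤ x + 1 := by linarith
  have hc := intervalIntegral.continuousOn_primitive_interval'
    (hint (x / 2) (x + 1) (by linarith) (by linarith)) Set.left_mem_uIcc
  rw [Set.uIcc_of_le hab] at hc
  have hn : Set.Icc (x / 2) (x + 1) ∈ 𝓝 x := Icc_mem_nhds (by linarith) (by linarith)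
  refine (((hc.continuousAt hn).const_add (u (x / 2))).congr ?_).continuousWithinAt
  filter_upwards [hn] with y hy
  exact (hu (x / 2) y (by linarith) (by linarith [hy.1])).symm

theorem isPrimitiveOn_apply_of_integral_eq
    (hbdd : ∀ a > 0, ∃ K, ∀ t ≥ a, ∀ i j, ‖A t i j‖ ≤ K)
    (hint : ∀ x y, 0 < x → 0 < y → IntervalIntegrable (fun t => A t *ᵥ u t) volume x y)
    (hu : ∀ x y, 0 < x → 0 < y → u y = u x + ∫ t in x..y, A t *ᵥ u t)
    (i : Fin 2) {a b : ℝ} (ha : 0 < a) (hab : a ≤ b) :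
    IsPrimitiveOn (fun t => u t i) (fun t => (A t *ᵥ u t) i) a b := by
  let P : (Fin 2 → ℂ) →L[ℝ] ℂ := ContinuousLinearMap.proj i
  obtain ⟨K, hK0, hK⟩ := exists_norm_mulVec_bound hbdd ha
  have huc := (continuousOn_of_integral_eq hint hu).mono
    (fun t (ht : t ∈ Set.Icc a b) => ha.trans_le ht.1)
  obtain ⟨M, hM⟩ := isCompact_Icc.exists_bound_of_continuousOn huc
  refine ⟨?_, ⟨2 * K * M, fun t ht => ?_⟩, fun x hx => ?_⟩
  · have h := hint a b ha (ha.trans_le hab)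
    exact ⟨P.integrable_comp h.1, P.integrable_comp h.2⟩
  · exact (norm_le_pi_norm _ i).trans (hK t ht.1 _ _ (hM t ht))
  · have hx0 := ha.trans_le hx.1
    have := P.intervalIntegral_comp_comm (hint a x ha hx0)
    change (∫ t in a..x, (A t *ᵥ u t) i) = (∫ t in a..x, A t *ᵥ u t) i at this
    rw [this, ← Pi.add_apply, ← hu a x ha hx0]

theorem exists_local_bound
    (hbdd : ∀ a > 0, ∃ K, ∀ t ≥ a, ∀ i j, ‖A t i j‖ ≤ K)
    (hint : ∀ x y, 0 < x → 0 < y → IntervalIntegrable (fun t => A t *ᵥ u t) volume x y)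
    (hu : ∀ x y, 0 < x → 0 < y → u y = u x + ∫ t in x..y, A t *ᵥ u t) :
    ∀ x > 0, ∃ r > 0, ∀ y > 0, |y - x| < r → ‖u x - u y‖ ≤ ‖u y‖ / 2 := by
  intro x hx
  obtain ⟨K, hK0, hK⟩ := exists_norm_mulVec_bound hbdd (half_pos hx)
  obtain ⟨r, hr, hrx, hrK⟩ : ∃ r > 0, r ≤ x / 2 ∧ r * (16 * (K + 1)) ≤ 1 :=
    ⟨min (x / 2) (1 / (16 * (K + 1))), by positivity, min_le_left _ _, by
      rw [← le_div_iff₀ (by positivity)]; exact min_le_right _ _⟩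
  refine ⟨r, hr, fun y hy hyr => ?_⟩
  rw [abs_lt] at hyr
  have hpos : ∀ t ∈ Set.Icc (x - r) (x + r), 0 < t := fun t ht => by linarith [ht.1]
  refine norm_sub_le_half_of_oscillation_le (a := x - r) (b := x + r)
    ((continuousOn_of_integral_eq hint hu).mono hpos) (fun M hM z hz w hw => ?_)
    y ⟨by linarith, by linarith⟩ x ⟨by linarith, by linarith⟩
  have hM0 : 0 ≤ M := (norm_nonneg _).trans (hM z hz)
  rw [hu z w (hpos z hz) (hpos w hw), add_sub_cancel_left]
  refine (intervalIntegral.norm_integral_le_of_norm_le_const (C := 2 * K * M)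
    fun t ht => ?_).trans ?_
  · have := Set.uIcc_subset_Icc hz hw (Set.uIoc_subset_uIcc ht)
    exact hK t (by linarith [this.1]) _ _ (hM t this)
  · have hzw : |w - z| ≤ 2 * r := by
      rw [abs_le]; constructor <;> linarith [hz.1, hz.2, hw.1, hw.2]
    calc 2 * K * M * |w - z| ≤ 2 * K * M * (2 * r) := by gcongr
      _ = (4 * (K * r)) * M := by ring
      _ ≤ 1 / 4 * M := by
        gcongr
        linarith

end LinearSystem

/-- For `ε₀ ≠ 0` every solution of the oscillating model system has a finite limit
at `+∞`, nonzero for every nonzero solution. -/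
theorem solutions_have_limits (β γ ε₀ c_r α : ℝ) (hβ : 0 < β)
    (hγ : γ ∈ Set.Ioo (1/2:ℝ) 1) (hε₀ : ε₀ ≠ 0) (hcr : 0 < c_r) (hα : 0 < α)
    (R : ℝ → Matrix (Fin 2) (Fin 2) ℂ)
    (hRmeas : ∀ i j, Measurable fun x => R x i j)
    (hR : ∀ x : ℝ, 0 ≤ x → ∀ i j, ‖R x i j‖ ≤ c_r / (x + 1) ^ (1 + α))
    (u : ℝ → (Fin 2 → ℂ))
    (hu : ∀ x y : ℝ, 0 < x → 0 < y →
      u y = u x + ∫ t in x..y,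
        ((((β / t ^ γ : ℝ) : ℂ) •
            (!![(Real.cos (ε₀*t) : ℂ), (Real.sin (ε₀*t) : ℂ);
                (Real.sin (ε₀*t) : ℂ), (-(Real.cos (ε₀*t)) : ℂ)] : Matrix (Fin 2) (Fin 2) ℂ)
          + R t)).mulVec (u t)) :
    ∃ L : Fin 2 → ℂ, Tendsto u atTop (𝓝 L) ∧ ((∃ x, 0 < x ∧ u x ≠ 0) → L ≠ 0) := by
  obtain ⟨hγ, -⟩ := hγ
  set A : ℝ → Matrix (Fin 2) (Fin 2) ℂ := fun t => ((β / t ^ γ : ℝ) : ℂ) •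
    (!![(Real.cos (ε₀*t) : ℂ), (Real.sin (ε₀*t) : ℂ);
        (Real.sin (ε₀*t) : ℂ), (-(Real.cos (ε₀*t)) : ℂ)] : Matrix (Fin 2) (Fin 2) ℂ) + R t
    with hA
  have hmeas : ∀ i j, Measurable fun t => A t i j := by
    intro i j
    refine Measurable.add ?_ (hRmeas i j)
    refine Measurable.mul (by fun_prop) ?_
    fin_cases i <;> fin_cases j <;> dsimp <;> fun_prop
  have hRle : ∀ t, 0 < t → ∀ i j, ‖R t i j‖ ≤ c_r * t ^ (-(1 + α)) := by
    intro t ht i j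
    refine (hR t ht.le i j).trans ?_
    rw [Real.rpow_neg ht.le, ← div_eq_mul_inv]
    gcongr
    linarith
  have hbdd : ∀ a > 0, ∃ K, ∀ t ≥ a, ∀ i j, ‖A t i j‖ ≤ K := by
    intro a ha
    refine ⟨β / a ^ γ + c_r * a ^ (-(1 + α)), fun t ht i j => ?_⟩
    have ht0 : 0 < t := ha.trans_le ht
    refine (norm_add_le _ _).trans (add_le_add ?_ ((hRle t ht0 i j).trans ?_))
    · have hent : ‖(!![(Real.cos (ε₀*t) : ℂ), (Real.sin (ε₀*t) : ℂ);
          (Real.sin (ε₀*t) : ℂ), (-(Real.cos (ε₀*t)) : ℂ)] : Matrix (Fin 2) (Fin 2) ℂ) i j‖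
          ≤ 1 := by
        have hc := Real.abs_cos_le_one (ε₀ * t)
        have hs := Real.abs_sin_le_one (ε₀ * t)
        rw [← Real.norm_eq_abs, ← Complex.norm_real] at hc hs
        fin_cases i <;> fin_cases j
        · exact hc
        · exact hs
        · exact hs
        · exact (norm_neg _).trans_le hc
      rw [Matrix.smul_apply, norm_smul, Complex.norm_real,
        Real.norm_of_nonneg (by positivity)]
      refine (mul_le_of_le_one_right (by positivity) hent).trans ?_
      gcongr
    · exact mul_le_mul_of_nonneg_left
        (Real.rpow_le_rpow_of_nonpos ha ht (by linarith)) hcr.le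
  have hint := fun x y (hx : 0 < x) (hy : 0 < y) =>
    intervalIntegrable_mulVec_of_integral_eq hmeas hbdd hu hx hy
  have hcont := continuousOn_of_integral_eq hint hu
  have hosc := eventually_oscillation_le (ρ := 2 * c_r) (r₀ := fun t => (R t).mulVec (u t) 0)
    (r₁ := fun t => (R t).mulVec (u t) 1) hβ.le hγ hε₀ hα (by positivity)
    (fun a b ha hab => isPrimitiveOn_apply_of_integral_eq hbdd hint hu 0 ha hab)
    (fun a b ha hab => isPrimitiveOn_apply_of_integral_eq hbdd hint hu 1 ha hab)
    (fun t ht => by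
      simp [hA, Matrix.mulVec, dotProduct, Fin.sum_univ_two,
        Real.rpow_neg ht.le, div_eq_mul_inv]
      ring)
    (fun t ht => by
      simp [hA, Matrix.mulVec, dotProduct, Fin.sum_univ_two,
        Real.rpow_neg ht.le, div_eq_mul_inv]
      ring)
    (fun t ht M h₀ h₁ => by
      have h := norm_mulVec_apply_le (hRle t ht) (Fin.forall_fin_two.mpr ⟨h₀, h₁⟩)
      simp only [← mul_assoc] at h
      exact ⟨h 0, h 1⟩)
  obtain ⟨L, hL, hL0⟩ := exists_tendsto_of_oscillation_le hcont fun η hη => by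
    filter_upwards [hosc η hη] with X hX Y M hM x hx y hy
    have h := hX Y M (fun t ht => ⟨(norm_le_pi_norm _ 0).trans (hM t ht),
      (norm_le_pi_norm _ 1).trans (hM t ht)⟩) x hx y hy
    have hM0 : 0 ≤ M := (norm_nonneg _).trans (hM x hx)
    exact (pi_norm_le_iff_of_nonneg (by positivity)).mpr (Fin.forall_fin_two.mpr h)
  refine ⟨L, hL, fun hne h0 => ?_⟩
  obtain ⟨x, hx, hux⟩ := hL0 h0
  exact ne_zero_of_local_bound hcont (exists_local_bound hbdd hint hu) hne x hx hux
end
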